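/- Let G = P₁ × P₂ × Z_n, where P₁ is a non-trivial non-cyclic p₁-group, P₂ is a non-trivial non-cyclic p₂-group, p₁ and p₂ are distinct primes, n ≥ 2, and neither p₁ nor p₂ divides n. Then the domination number of the difference graph D(G) is at least 3. -/

import Mathlib

/-- Adjacency in the difference of the enhanced power graph and the power graph:
`⟨x, y⟩` is cyclic but neither of `x`, `y` is a power of the other. -/
def diffAdj {G : Type*} [Group G] (x y : G) : Prop :=
  IsCyclic (Subgroup.closure ({x, y} : Set G)) ∧
    (¬ ∃ k : ℤ, y = x ^ k) ∧ (¬ ∃ k : ℤ, x = y ^ k)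

/-- The vertex set of the difference graph `𝒟(G)`: the elements of `G` that are
non-isolated in the difference of the enhanced power graph and the power graph. -/
abbrev DiffVertex (G : Type*) [Group G] := {x : G // ∃ y, diffAdj x y}

/-- The difference graph `𝒟(G)` of a group `G`. -/
def diffGraph (G : Type*) [Group G] : SimpleGraph (DiffVertex G) :=
  SimpleGraph.fromRel (fun a b => diffAdj a.val b.val)

/-- A dominating set of a graph: every vertex is in `S` or adjacent to a vertex of `S`. -/
def IsDominatingSet {V : Type*} (Γ : SimpleGraph V) (S : Set V) : Prop :=
  ∀ v : V, v ∈ S ∨ ∃ u ∈ S, Γ.Adj u v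

/-- The domination number of a graph: the least size of a dominating set. -/
noncomputable def dominationNumber {V : Type*} (Γ : SimpleGraph V) : ℕ :=
  sInf {n : ℕ | ∃ S : Set V, IsDominatingSet Γ S ∧ S.ncard = n}

/-- A maximal cyclic subgroup: a cyclic subgroup not properly contained in
another cyclic subgroup. -/
def IsMaxCyclic {G : Type*} [Group G] (C : Subgroup G) : Prop :=
  IsCyclic C ∧ ∀ D : Subgroup G, IsCyclic D → C ≤ D → C = D

/-!
Suppose `{a, b}` dominates `𝒟(A × B × C)`. Let `x ∈ A` and `y ∈ B` generate maximal cyclic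
subgroups and lie outside the cyclic subgroups generated by the corresponding coordinates of `a`
and `b`. One of `a` and `b`, say `a`, is adjacent to `(x, y, 1)`, so its first two coordinates lie
in `⟨x⟩` and `⟨y⟩`. Replacing one of them by `x` or `y` gives a vertex having `a` as a power, which
must then be adjacent to `b`. Hence the first two coordinates of `b` also lie in `⟨x⟩` and `⟨y⟩`,
the elements `(a₂, a₃)` and `(b₂, b₃)` lie in a common cyclic subgroup `⟨h⟩` with `h ≠ 1`, and
neither of `a`, `b` is a power of the other. In particular `⟨a₁, b₁⟩` is a cyclic group `⟨j⟩`. As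
`A` is not cyclic, `x` can be chosen outside `⟨j⟩`, and `j ∈ ⟨x⟩` still holds. Then `(j, h)` is
adjacent to `(x, 1)`, but both `a` and `b` are powers of `(j, h)`, so neither dominates it.
-/

open Subgroup

section JointlyCyclic

variable {G : Type*} [Group G] {u v x y : G}

/-- `x` and `y` are equal or adjacent in the enhanced power graph. -/
def JointlyCyclic (x y : G) : Prop :=
  IsCyclic (closure ({x, y} : Set G))

theorem JointlyCyclic.exists_generator (h : JointlyCyclic u v) :
    ∃ j, u ∈ zpowers j ∧ v ∈ zpowers j ∧ ∀ x, u ∈ zpowers x → v ∈ zpowers x → j ∈ zpowers x := by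
  obtain ⟨j, hj⟩ := (Subgroup.isCyclic_iff_exists_zpowers_eq_top _).1 h
  refine ⟨j, hj ▸ subset_closure (by simp), hj ▸ subset_closure (by simp), fun x hu hv ↦ ?_⟩
  rw [← zpowers_le, hj]
  simp [Set.pair_subset_iff, hu, hv]

theorem jointlyCyclic_iff_exists_zpowers :
    JointlyCyclic x y ↔ ∃ g, x ∈ zpowers g ∧ y ∈ zpowers g := by
  constructor
  · intro h
    obtain ⟨g, hx, hy, -⟩ := h.exists_generator
    exact ⟨g, hx, hy⟩
  · rintro ⟨g, hx, hy⟩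
    have closure_le_zpowers : closure {x, y} ≤ zpowers g := by simp [Set.pair_subset_iff, hx, hy]
    exact isCyclic_of_le closure_le_zpowers

theorem JointlyCyclic.symm (h : JointlyCyclic x y) : JointlyCyclic y x := by
  rwa [JointlyCyclic, Set.pair_comm]

theorem jointlyCyclic_of_mem_zpowers (h : x ∈ zpowers y) : JointlyCyclic x y :=
  jointlyCyclic_iff_exists_zpowers.2 ⟨y, h, mem_zpowers y⟩

theorem jointlyCyclic_one_left (x : G) : JointlyCyclic 1 x :=
  jointlyCyclic_of_mem_zpowers (one_mem _)

theorem JointlyCyclic.exists_ne_one [Nontrivial G] (h : JointlyCyclic u v) :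
    ∃ g, g ≠ 1 ∧ u ∈ zpowers g ∧ v ∈ zpowers g := by
  obtain ⟨g, hu, hv⟩ := jointlyCyclic_iff_exists_zpowers.1 h
  rcases eq_or_ne g 1 with rfl | hg
  · obtain ⟨k, hk⟩ := exists_ne (1 : G)
    have zpowers_one_le : zpowers (1 : G) ≤ zpowers k := zpowers_le.2 (one_mem _)
    exact ⟨k, hk, zpowers_one_le hu, zpowers_one_le hv⟩
  · exact ⟨g, hg, hu, hv⟩

theorem diffAdj_iff :
    diffAdj x y ↔ JointlyCyclic x y ∧ y ∉ zpowers x ∧ x ∉ zpowers y := by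
  simp only [diffAdj, JointlyCyclic, mem_zpowers_iff, eq_comm]

theorem diffAdj_symm (h : diffAdj x y) : diffAdj y x :=
  ⟨JointlyCyclic.symm h.1, h.2.2, h.2.1⟩

theorem IsMaxCyclic.mem_zpowers_of_jointlyCyclic (hx : IsMaxCyclic (zpowers x))
    (h : JointlyCyclic u x) : u ∈ zpowers x := by
  obtain ⟨g, hu, hxg⟩ := jointlyCyclic_iff_exists_zpowers.1 h
  rwa [hx.2 (zpowers g) inferInstance (zpowers_le.2 hxg)]

theorem exists_isMaxCyclic_zpowers_mem [Finite G] (u : G) :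
    ∃ x, IsMaxCyclic (zpowers x) ∧ u ∈ zpowers x := by
  obtain ⟨C, hle, hC, hmax⟩ :=
    Finite.exists_le_maximal (p := fun C : Subgroup G ↦ IsCyclic C)
      (inferInstance : IsCyclic (zpowers u))
  obtain ⟨x, rfl⟩ := (Subgroup.isCyclic_iff_exists_zpowers_eq_top C).1 hC
  exact ⟨x, ⟨hC, fun D hD hCD ↦ hCD.antisymm (hmax hD hCD)⟩, zpowers_le.1 hle⟩

theorem exists_notMem_zpowers_of_not_isCyclic (hG : ¬ IsCyclic G) (u v : G) :
    ∃ x, x ∉ zpowers u ∧ x ∉ zpowers v := by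
  have zpowers_ne_top (g : G) : zpowers g ≠ ⊤ :=
    fun h ↦ hG (isCyclic_iff_exists_zpowers_eq_top.2 ⟨g, h⟩)
  by_contra! h
  have univ_subset : ((⊤ : Subgroup G) : Set G) ⊆ zpowers u ∪ zpowers v :=
    fun x _ ↦ or_iff_not_imp_left.2 (h x)
  rcases SubgroupClass.subset_union.1 univ_subset with hu | hv
  · exact zpowers_ne_top u (top_le_iff.1 hu)
  · exact zpowers_ne_top v (top_le_iff.1 hv)

/-- `x` generates a maximal cyclic subgroup and is a power of neither `u` nor `v`. It is
used with `u` and `v` the corresponding coordinates of the two elements of a dominating pair. -/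
structure IsMaxCyclicAvoiding (x u v : G) : Prop where
  isMaxCyclic : IsMaxCyclic (zpowers x)
  notMem_left : x ∉ zpowers u
  notMem_right : x ∉ zpowers v

theorem IsMaxCyclicAvoiding.symm (h : IsMaxCyclicAvoiding x u v) : IsMaxCyclicAvoiding x v u :=
  ⟨h.isMaxCyclic, h.notMem_right, h.notMem_left⟩

theorem IsMaxCyclicAvoiding.ne_one (h : IsMaxCyclicAvoiding x u v) : x ≠ 1 := by
  rintro rfl
  exact h.notMem_left (one_mem _)

theorem exists_isMaxCyclicAvoiding [Finite G] (hG : ¬ IsCyclic G) (u v : G) :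
    ∃ x, IsMaxCyclicAvoiding x u v := by
  obtain ⟨w, hwu, hwv⟩ := exists_notMem_zpowers_of_not_isCyclic hG u v
  obtain ⟨x, hx, hwx⟩ := exists_isMaxCyclic_zpowers_mem w
  exact ⟨x, hx, fun h ↦ hwu (zpowers_le.2 h hwx), fun h ↦ hwv (zpowers_le.2 h hwx)⟩

end JointlyCyclic

section Prod

variable {A H : Type*} [Group A] [Group H]

theorem mem_zpowers_prod_iff_of_coprime_orderOf {g u : A × H}
    (hcop : (orderOf g.1).Coprime (orderOf g.2)) :
    u ∈ zpowers g ↔ u.1 ∈ zpowers g.1 ∧ u.2 ∈ zpowers g.2 := by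
  constructor
  · rintro ⟨k, rfl⟩
    exact ⟨⟨k, rfl⟩, ⟨k, rfl⟩⟩
  · rintro ⟨⟨k, hk⟩, ⟨l, hl⟩⟩
    obtain ⟨s, t, hst⟩ := Nat.isCoprime_iff_coprime.2 hcop
    refine ⟨k * (t * orderOf g.2) + l * (s * orderOf g.1), Prod.ext ?_ ?_⟩
    · refine (zpow_eq_zpow_iff_modEq.2 (Int.modEq_iff_dvd.2 ⟨(k - l) * s, ?_⟩)).trans hk
      linear_combination k * -hst
    · refine (zpow_eq_zpow_iff_modEq.2 (Int.modEq_iff_dvd.2 ⟨(l - k) * t, ?_⟩)).trans hl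
      linear_combination l * -hst

theorem mem_zpowers_prod_iff (hcop : (Nat.card A).Coprime (Nat.card H)) {g u : A × H} :
    u ∈ zpowers g ↔ u.1 ∈ zpowers g.1 ∧ u.2 ∈ zpowers g.2 :=
  mem_zpowers_prod_iff_of_coprime_orderOf
    (hcop.of_dvd (orderOf_dvd_natCard g.1) (orderOf_dvd_natCard g.2))

theorem jointlyCyclic_prod_iff (hcop : (Nat.card A).Coprime (Nat.card H)) {u v : A × H} :
    JointlyCyclic u v ↔ JointlyCyclic u.1 v.1 ∧ JointlyCyclic u.2 v.2 := by
  simp only [jointlyCyclic_iff_exists_zpowers, mem_zpowers_prod_iff hcop, Prod.exists]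
  grind

theorem diffAdj_prod_of_notMem (hcop : (Nat.card A).Coprime (Nat.card H)) {u v : A × H}
    (h₁ : JointlyCyclic u.1 v.1) (h₂ : JointlyCyclic u.2 v.2)
    (hu : u.1 ∉ zpowers v.1) (hv : v.2 ∉ zpowers u.2) : diffAdj u v := by
  rw [diffAdj_iff, jointlyCyclic_prod_iff hcop, mem_zpowers_prod_iff hcop,
    mem_zpowers_prod_iff hcop]
  exact ⟨⟨h₁, h₂⟩, fun h ↦ hv h.2, fun h ↦ hu h.1⟩

end Prod

section Domination

variable {V : Type*} {Γ : SimpleGraph V}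

theorem IsDominatingSet.mono {S T : Set V} (hS : IsDominatingSet Γ S) (hST : S ⊆ T) :
    IsDominatingSet Γ T :=
  fun v ↦ (hS v).imp (@hST v) fun ⟨u, hu, huv⟩ ↦ ⟨u, hST hu, huv⟩

theorem IsDominatingSet.swap {a b : V} (hS : IsDominatingSet Γ {a, b}) :
    IsDominatingSet Γ {b, a} :=
  Set.pair_comm a b ▸ hS

theorem three_le_dominationNumber [Finite V] [Nonempty V]
    (h : ∀ a b, ¬ IsDominatingSet Γ {a, b}) : 3 ≤ dominationNumber Γ := by
  refine le_csInf ⟨_, Set.univ, fun v ↦ Or.inl trivial, rfl⟩ ?_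
  rintro _ ⟨S, hS, rfl⟩
  have exists_mem_ne (a b : V) : ∃ c ∈ S, a ≠ c ∧ b ≠ c := by
    by_contra! hab
    exact h a b (hS.mono fun c hc ↦ by grind)
  obtain ⟨a, ha, -⟩ := exists_mem_ne (Classical.arbitrary V) (Classical.arbitrary V)
  obtain ⟨b, hb, hab, -⟩ := exists_mem_ne a a
  obtain ⟨c, hc, hac, hbc⟩ := exists_mem_ne a b
  exact (Set.two_lt_ncard).2 ⟨a, ha, b, hb, c, hc, hab, hac, hbc⟩

variable {G : Type*} [Group G] {a b : DiffVertex G} {v w : G}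

theorem diffAdj_of_adj_diffGraph (h : (diffGraph G).Adj a b) : diffAdj a.1 b.1 :=
  ((SimpleGraph.fromRel_adj _ _ _).1 h).2.elim id diffAdj_symm

theorem IsDominatingSet.diffAdj_or_diffAdj (hS : IsDominatingSet (diffGraph G) {a, b})
    (hvw : diffAdj v w) (hva : v ∉ zpowers a.1) (hvb : v ∉ zpowers b.1) :
    diffAdj a.1 v ∨ diffAdj b.1 v := by
  simp only [IsDominatingSet, Set.mem_insert_iff, Set.mem_singleton_iff, exists_eq_or_imp,
    exists_eq_left] at hS
  rcases hS ⟨v, w, hvw⟩ with (rfl | rfl) | hav | hbv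
  · exact absurd (mem_zpowers v) hva
  · exact absurd (mem_zpowers v) hvb
  · exact Or.inl (diffAdj_of_adj_diffGraph (b := ⟨v, w, hvw⟩) hav)
  · exact Or.inr (diffAdj_of_adj_diffGraph (b := ⟨v, w, hvw⟩) hbv)

theorem IsDominatingSet.diffAdj_of_mem_zpowers (hS : IsDominatingSet (diffGraph G) {a, b})
    (hvw : diffAdj v w) (hav : a.1 ∈ zpowers v) (hva : v ∉ zpowers a.1) (hvb : v ∉ zpowers b.1) :
    diffAdj b.1 v :=
  (hS.diffAdj_or_diffAdj hvw hva hvb).resolve_left fun h ↦ (diffAdj_iff.1 h).2.2 hav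

end Domination

section DominatingPairProd

variable {A H : Type*} [Group A] [Group H] {a b : DiffVertex (A × H)} {x k : A} {h l : H}

theorem IsDominatingSet.diffAdj_replace_fst (hcop : (Nat.card A).Coprime (Nat.card H))
    (hS : IsDominatingSet (diffGraph (A × H)) {a, b})
    (hax : a.1.1 ∈ zpowers x) (hxa : x ∉ zpowers a.1.1) (hxb : x ∉ zpowers b.1.1)
    (hal : JointlyCyclic a.1.2 l) (hla : l ∉ zpowers a.1.2) : diffAdj b.1 (x, a.1.2) := by
  have hx : x ≠ 1 := fun hx ↦ hxa (hx ▸ one_mem _)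
  have vertex : diffAdj (x, a.1.2) (1, l) :=
    diffAdj_prod_of_notMem hcop (jointlyCyclic_one_left x).symm hal (by simpa using hx) hla
  apply hS.diffAdj_of_mem_zpowers vertex <;> simp [mem_zpowers_prod_iff hcop, hax, hxa, hxb]

theorem IsDominatingSet.diffAdj_replace_snd (hcop : (Nat.card A).Coprime (Nat.card H))
    (hS : IsDominatingSet (diffGraph (A × H)) {a, b})
    (hah : a.1.2 ∈ zpowers h) (hha : h ∉ zpowers a.1.2) (hhb : h ∉ zpowers b.1.2)
    (hka : JointlyCyclic k a.1.1) (hka' : k ∉ zpowers a.1.1) : diffAdj b.1 (a.1.1, h) := by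
  have hh : h ≠ 1 := fun hh ↦ hha (hh ▸ one_mem _)
  have vertex : diffAdj (k, 1) (a.1.1, h) :=
    diffAdj_prod_of_notMem hcop hka (jointlyCyclic_one_left h) hka' (by simpa using hh)
  apply hS.diffAdj_of_mem_zpowers (diffAdj_symm vertex) <;>
    simp [mem_zpowers_prod_iff hcop, hah, hha, hhb]

end DominatingPairProd

section DominatingPairTripleProd

variable {A B C : Type*} [Group A] [Group B] [Group C] {a b : DiffVertex (A × B × C)}
  {x : A} {y : B}

theorem IsDominatingSet.mem_zpowers_or_mem_zpowers [Nontrivial C]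
    (hA : (Nat.card A).Coprime (Nat.card (B × C))) (hB : (Nat.card B).Coprime (Nat.card C))
    (hS : IsDominatingSet (diffGraph (A × B × C)) {a, b})
    (hx : IsMaxCyclicAvoiding x a.1.1 b.1.1) (hy : IsMaxCyclic (zpowers y)) :
    (a.1.1 ∈ zpowers x ∧ a.1.2.1 ∈ zpowers y) ∨ (b.1.1 ∈ zpowers x ∧ b.1.2.1 ∈ zpowers y) := by
  have mem_zpowers_of_diffAdj {c : A × B × C} (h : diffAdj c (x, y, 1)) :
      c.1 ∈ zpowers x ∧ c.2.1 ∈ zpowers y := by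
    obtain ⟨h₁, h₂⟩ := (jointlyCyclic_prod_iff hA).1 (diffAdj_iff.1 h).1
    exact ⟨hx.isMaxCyclic.mem_zpowers_of_jointlyCyclic h₁,
      hy.mem_zpowers_of_jointlyCyclic ((jointlyCyclic_prod_iff hB).1 h₂).1⟩
  obtain ⟨z, hz⟩ := exists_ne (1 : C)
  have vertex : diffAdj (x, y, 1) (1, 1, z) :=
    diffAdj_prod_of_notMem hA (jointlyCyclic_one_left x).symm
      ((jointlyCyclic_prod_iff hB).2 ⟨(jointlyCyclic_one_left y).symm, jointlyCyclic_one_left z⟩)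
      (by simpa using hx.ne_one) (by simp [mem_zpowers_prod_iff hB, hz])
  exact (hS.diffAdj_or_diffAdj vertex (by simp [mem_zpowers_prod_iff hA, hx.notMem_left])
    (by simp [mem_zpowers_prod_iff hA, hx.notMem_right])).imp
    mem_zpowers_of_diffAdj mem_zpowers_of_diffAdj

theorem IsDominatingSet.diffAdj_replace (hA : (Nat.card A).Coprime (Nat.card (B × C)))
    (hB : (Nat.card B).Coprime (Nat.card C))
    (hS : IsDominatingSet (diffGraph (A × B × C)) {a, b})
    (hx : IsMaxCyclicAvoiding x a.1.1 b.1.1) (hy : IsMaxCyclicAvoiding y a.1.2.1 b.1.2.1)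
    (hax : a.1.1 ∈ zpowers x) (hay : a.1.2.1 ∈ zpowers y) :
    diffAdj b.1 (x, a.1.2) ∧ diffAdj b.1 (a.1.1, y, a.1.2.2) := by
  have hah : a.1.2 ∈ zpowers (y, a.1.2.2) := by simp [mem_zpowers_prod_iff hB, hay]
  have hha : (y, a.1.2.2) ∉ zpowers a.1.2 := by simp [mem_zpowers_prod_iff hB, hy.notMem_left]
  have hhb : (y, a.1.2.2) ∉ zpowers b.1.2 := by simp [mem_zpowers_prod_iff hB, hy.notMem_right]
  exact ⟨hS.diffAdj_replace_fst hA hax hx.notMem_left hx.notMem_right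
      (jointlyCyclic_of_mem_zpowers hah) hha,
    hS.diffAdj_replace_snd hA hah hha hhb (jointlyCyclic_of_mem_zpowers hax).symm hx.notMem_left⟩

theorem IsDominatingSet.mem_zpowers_right_of_left
    (hA : (Nat.card A).Coprime (Nat.card (B × C))) (hB : (Nat.card B).Coprime (Nat.card C))
    (hS : IsDominatingSet (diffGraph (A × B × C)) {a, b})
    (hx : IsMaxCyclicAvoiding x a.1.1 b.1.1) (hy : IsMaxCyclicAvoiding y a.1.2.1 b.1.2.1)
    (ha : a.1.1 ∈ zpowers x ∧ a.1.2.1 ∈ zpowers y) :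
    b.1.1 ∈ zpowers x ∧ b.1.2.1 ∈ zpowers y := by
  obtain ⟨hbx, hby⟩ := hS.diffAdj_replace hA hB hx hy ha.1 ha.2
  have jointlyCyclic_x : JointlyCyclic b.1.1 x :=
    ((jointlyCyclic_prod_iff hA).1 (diffAdj_iff.1 hbx).1).1
  have jointlyCyclic_y : JointlyCyclic b.1.2.1 y :=
    ((jointlyCyclic_prod_iff hB).1 ((jointlyCyclic_prod_iff hA).1 (diffAdj_iff.1 hby).1).2).1
  exact ⟨hx.isMaxCyclic.mem_zpowers_of_jointlyCyclic jointlyCyclic_x,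
    hy.isMaxCyclic.mem_zpowers_of_jointlyCyclic jointlyCyclic_y⟩

theorem IsDominatingSet.mem_zpowers_left [Nontrivial C]
    (hA : (Nat.card A).Coprime (Nat.card (B × C))) (hB : (Nat.card B).Coprime (Nat.card C))
    (hS : IsDominatingSet (diffGraph (A × B × C)) {a, b})
    (hx : IsMaxCyclicAvoiding x a.1.1 b.1.1) (hy : IsMaxCyclicAvoiding y a.1.2.1 b.1.2.1) :
    a.1.1 ∈ zpowers x ∧ a.1.2.1 ∈ zpowers y := by
  rcases hS.mem_zpowers_or_mem_zpowers hA hB hx hy.isMaxCyclic with ha | hb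
  · exact ha
  · exact hS.swap.mem_zpowers_right_of_left hA hB hx.symm hy.symm hb

theorem IsDominatingSet.jointlyCyclic_snd_and_notMem_zpowers [Nontrivial C]
    (hA : (Nat.card A).Coprime (Nat.card (B × C))) (hB : (Nat.card B).Coprime (Nat.card C))
    (hS : IsDominatingSet (diffGraph (A × B × C)) {a, b})
    (hx : IsMaxCyclicAvoiding x a.1.1 b.1.1) (hy : IsMaxCyclicAvoiding y a.1.2.1 b.1.2.1) :
    JointlyCyclic b.1.2 a.1.2 ∧ b.1 ∉ zpowers a.1 := by
  obtain ⟨hax, hay⟩ := hS.mem_zpowers_left hA hB hx hy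
  obtain ⟨hcyc, -, hb⟩ := diffAdj_iff.1 (hS.diffAdj_replace hA hB hx hy hax hay).1
  have ha : a.1 ∈ zpowers (x, a.1.2) := (mem_zpowers_prod_iff hA).2 ⟨hax, mem_zpowers _⟩
  exact ⟨((jointlyCyclic_prod_iff hA).1 hcyc).2, fun hba ↦ hb (zpowers_le.2 ha hba)⟩

theorem not_isDominatingSet_pair [Finite A] [Finite B] [Nontrivial C]
    (hA : (Nat.card A).Coprime (Nat.card (B × C))) (hB : (Nat.card B).Coprime (Nat.card C))
    (hcA : ¬ IsCyclic A) (hcB : ¬ IsCyclic B) (a b : DiffVertex (A × B × C)) :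
    ¬ IsDominatingSet (diffGraph (A × B × C)) {a, b} := by
  intro hS
  obtain ⟨y, hy⟩ := exists_isMaxCyclicAvoiding hcB a.1.2.1 b.1.2.1
  have mem_zpowers_fst {x : A} (hx : IsMaxCyclicAvoiding x a.1.1 b.1.1) :
      a.1.1 ∈ zpowers x ∧ b.1.1 ∈ zpowers x :=
    ⟨(hS.mem_zpowers_left hA hB hx hy).1,
      (hS.swap.mem_zpowers_left hA hB hx.symm hy.symm).1⟩
  obtain ⟨x₀, hx₀⟩ := exists_isMaxCyclicAvoiding hcA a.1.1 b.1.1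
  obtain ⟨hab₂, hba⟩ := hS.jointlyCyclic_snd_and_notMem_zpowers hA hB hx₀ hy
  obtain ⟨-, hab⟩ := hS.swap.jointlyCyclic_snd_and_notMem_zpowers hA hB hx₀.symm hy.symm
  obtain ⟨h, hh, hbh, hah⟩ := hab₂.exists_ne_one
  obtain ⟨j, haj, hbj, hj⟩ :=
    (jointlyCyclic_iff_exists_zpowers.2 ⟨x₀, mem_zpowers_fst hx₀⟩).exists_generator
  obtain ⟨x, hx, hxj, -⟩ := exists_isMaxCyclicAvoiding hcA j j
  obtain ⟨hax, hbx⟩ := mem_zpowers_fst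
    ⟨hx, fun hxa ↦ hxj (zpowers_le.2 haj hxa), fun hxb ↦ hxj (zpowers_le.2 hbj hxb)⟩
  have vertex : diffAdj (x, 1) (j, h) :=
    diffAdj_prod_of_notMem hA (jointlyCyclic_of_mem_zpowers (hj x hax hbx)).symm
      (jointlyCyclic_one_left h) hxj (by simpa using hh)
  have ha : a.1 ∈ zpowers (j, h) := (mem_zpowers_prod_iff hA).2 ⟨haj, hah⟩
  have hb : b.1 ∈ zpowers (j, h) := (mem_zpowers_prod_iff hA).2 ⟨hbj, hbh⟩
  have adj : diffAdj b.1 (j, h) :=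
    hS.diffAdj_of_mem_zpowers (diffAdj_symm vertex) ha
      (fun hja ↦ hba (zpowers_le.2 hja hb)) (fun hjb ↦ hab (zpowers_le.2 hjb ha))
  exact (diffAdj_iff.1 adj).2.2 hb

end DominatingPairTripleProd

theorem nonempty_diffVertex_prod {A H : Type*} [Group A] [Group H] [Nontrivial A] [Nontrivial H]
    (hcop : (Nat.card A).Coprime (Nat.card H)) : Nonempty (DiffVertex (A × H)) := by
  obtain ⟨x, hx⟩ := exists_ne (1 : A)
  obtain ⟨h, hh⟩ := exists_ne (1 : H)
  exact ⟨(x, 1), (1, h), diffAdj_prod_of_notMem hcop (jointlyCyclic_one_left x).symm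
    (jointlyCyclic_one_left h) (by simpa using hx) (by simpa using hh)⟩

theorem domination_number_ge_three_general {A B C : Type*} [Group A] [Group B] [Group C]
    [Finite A] [Finite B] [Finite C] [Nontrivial C]
    (hAB : (Nat.card A).Coprime (Nat.card B)) (hAC : (Nat.card A).Coprime (Nat.card C))
    (hBC : (Nat.card B).Coprime (Nat.card C))
    (hA : ¬ IsCyclic A) (hB : ¬ IsCyclic B) :
    3 ≤ dominationNumber (diffGraph (A × B × C)) := by
  have hA_BC : (Nat.card A).Coprime (Nat.card (B × C)) :=
    Nat.card_prod B C ▸ hAB.mul_right hAC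
  have := Nontrivial.of_not_isCyclic hA
  have := nonempty_diffVertex_prod hA_BC
  exact three_le_dominationNumber (not_isDominatingSet_pair hA_BC hBC hA hB)

theorem coprime_natCard_of_isPGroup {p n : ℕ} {G : Type*} [Group G] [Finite G]
    (hG : IsPGroup p G) (hpn : p.Coprime n) : (Nat.card G).Coprime n := by
  obtain ⟨k, hk⟩ := isPGroup_iff_card_dvd_pow.1 hG
  exact (hpn.pow_left k).coprime_dvd_left hk

/-- Lemma 5.12: if `G = P₁ × P₂ × ℤ_n`, where `P₁, P₂` are non-trivial non-cyclic
`p₁`- and `p₂`-groups for distinct primes `p₁, p₂`, `n ≥ 2`, and `p₁ ∤ n`, `p₂ ∤ n`,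
then `γ(𝒟(G)) ≥ 3`. -/
theorem domination_number_ge_three
    (p₁ p₂ n : ℕ) (hp₁ : p₁.Prime) (hp₂ : p₂.Prime) (hne : p₁ ≠ p₂)
    (hn : 2 ≤ n) (hd₁ : ¬ p₁ ∣ n) (hd₂ : ¬ p₂ ∣ n)
    (P₁ P₂ : Type*) [Group P₁] [Group P₂] [Finite P₁] [Finite P₂]
    [Nontrivial P₁] [Nontrivial P₂]
    (hP₁ : IsPGroup p₁ P₁) (hP₂ : IsPGroup p₂ P₂)
    (hc₁ : ¬ IsCyclic P₁) (hc₂ : ¬ IsCyclic P₂) :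
    3 ≤ dominationNumber (diffGraph (P₁ × P₂ × Multiplicative (ZMod n))) := by
  have : NeZero n := ⟨by lia⟩
  have : Nontrivial (ZMod n) := ZMod.nontrivial_iff.2 (by lia)
  have coprime_primes : p₂.Coprime p₁ := (Nat.coprime_primes hp₂ hp₁).2 hne.symm
  exact domination_number_ge_three_general
    (coprime_natCard_of_isPGroup hP₁ (coprime_natCard_of_isPGroup hP₂ coprime_primes).symm)
    (coprime_natCard_of_isPGroup hP₁ (by simpa using hp₁.coprime_iff_not_dvd.2 hd₁))
    (coprime_natCard_of_isPGroup hP₂ (by simpa using hp₂.coprime_iff_not_dvd.2 hd₂))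
    hc₁ hc₂
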